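/- arXiv:2205.00059 — 3 statements merged into one kernel-verified Lean document; each statement's English description precedes it below -/
import Mathlib

section
/- Let λ > 0 and β ∈ (0,1]. For every n ∈ ℕ₀ and every x ∈ ℝ, the Appell polynomials generated by the fractional Poisson measure satisfy A_n^{λ,β}(x) = ∑_{k=0}^n binom(n,k) [∑_{i=0}^{n−k} (−1)^i i! B_{n−k,i}(M_{λ,β}(1), …, M_{λ,β}(n−k−i+1))] x^k, where B_{n,k} are the Bell polynomials and M_{λ,β}(j) is the j-th moment of the fractional Poisson measure. -/
/-!
The generating function of the Appell polynomials is `e^{zx} / f(z)` with `f(z) = E_β(λ(e^z - 1))`,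
and `f` is the moment generating function of the fractional Poisson measure. The formula is the
Leibniz rule for `e^{zx} · (1/f(z))` together with an expression of the derivatives of `1/f` at `0`
through those of `f`, which are the moments.

*The measure.* The weights of `fracPoisson` go through `ENNReal.ofReal`, so one needs
`E_β^{(k)}(-λ) ≥ 0`, the complete monotonicity of `x ↦ E_β(-x)`. The proof is by discretization:
`E_β^{(k)}(-λ) / k!` is the limit as `N → ∞`, with `c = λ / N^β`, of `N^(-βk)` times the `N`-th
coefficient of `(1-z)^(β-1) / ((1-z)^β + c)^(k+1)`. As `(1-z)^β = 1 - S(z)` where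
`S` has nonnegative coefficients and `S(0) = 0`, these coefficients are nonnegative
(`coeff_resolvent_nonneg`). The passage to the limit is Euler's product for `Γ` (`tendsto_negBinom`)
and dominated convergence based on `negBinom_le`; the result is `series_nonneg`.

*The moments.* The Taylor expansion of the entire function `E_β` at `-λ`, evaluated at `λ(e^z - 1)`,
is exactly `∫ e^{zx} dπ(x)` (`complexMGF_fracPoisson`), hence `iteratedDeriv_genFun`.

*The reciprocal.* In formal power series, `1 / (1 + b) = ∑ (-b)^i` for `b = ∑_{m ≥ 1} x_m X^m / m!`,
and by the multinomial theorem the coefficients of `b^i / i!` are the Bell polynomials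
(`coeff_bellSeries_pow`, `coeff_reciprocal`, `iteratedDeriv_inv_zero`).
-/

open MeasureTheory Finset
open scoped ENNReal NNReal

noncomputable section

/-- The complex Mittag-Leffler function `E_β(z) = ∑ zⁿ / Γ(βn+1)`. -/
def mittagLeffler (β : ℝ) (z : ℂ) : ℂ :=
  ∑' n : ℕ, z ^ n / (Complex.Gamma ((β * n + 1 : ℝ) : ℂ))

/-- The real Mittag-Leffler function `E_β(x) = ∑ xⁿ / Γ(βn+1)`. -/
def mittagLefflerR (β : ℝ) (x : ℝ) : ℝ :=
  ∑' n : ℕ, x ^ n / Real.Gamma (β * n + 1)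

/-- The fractional Poisson measure `π_{λ,β} = ∑_k (λᵏ/k!) E_β⁽ᵏ⁾(-λ) δ_k` on `ℝ`. -/
def fracPoisson (lam β : ℝ) : Measure ℝ :=
  Measure.sum fun k : ℕ =>
    ENNReal.ofReal (lam ^ k / k.factorial * iteratedDeriv k (mittagLefflerR β) (-lam)) •
      Measure.dirac (k : ℝ)

/-- The Poisson measure with rate `μ` on `ℝ`, `π_μ({k}) = (μᵏ/k!) e^{-μ}`. -/
def poissonMeasureR (μ : ℝ) : Measure ℝ :=
  Measure.sum fun k : ℕ =>
    ENNReal.ofReal (μ ^ k / k.factorial * Real.exp (-μ)) • Measure.dirac (k : ℝ)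

/-- The generalized Appell polynomials
`C_n^{λ,β}(x) = dⁿ/dzⁿ [e^{x log(1+z)} / E_β(λz)]` at `z = 0`. -/
def genAppell (lam β : ℝ) (n : ℕ) (x : ℂ) : ℂ :=
  iteratedDeriv n
    (fun z : ℂ => Complex.exp (x * Complex.log (1 + z)) / mittagLeffler β (lam * z)) 0

/-- The Appell polynomials `A_n^{λ,β}(x) = dⁿ/dzⁿ [e^{zx} / E_β(λ(eᶻ-1))]` at `z = 0`. -/
def appell (lam β : ℝ) (n : ℕ) (x : ℂ) : ℂ :=
  iteratedDeriv n
    (fun z : ℂ => Complex.exp (z * x) / mittagLeffler β (lam * (Complex.exp z - 1))) 0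

/-- Stirling numbers of the first kind, via `(log(1+z))^k = k! ∑_{n≥k} s(n,k) zⁿ/n!`. -/
def stirlingFst (n k : ℕ) : ℝ :=
  iteratedDeriv n (fun x : ℝ => (Real.log (1 + x)) ^ k) 0 / k.factorial

/-- Stirling numbers of the second kind, via `(eᶻ-1)^k = k! ∑_{n≥k} S(n,k) zⁿ/n!`. -/
def stirlingSnd (n k : ℕ) : ℝ :=
  iteratedDeriv n (fun x : ℝ => (Real.exp x - 1) ^ k) 0 / k.factorial

/-- The `n`-th moment of the fractional Poisson measure. -/
def fpMoment (lam β : ℝ) (n : ℕ) : ℝ := ∫ x, x ^ n ∂(fracPoisson lam β)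

/-- `M̃_{λ,β}(m) = m! λᵐ / Γ(mβ+1)`. -/
def tildeM (lam β : ℝ) (m : ℕ) : ℝ := m.factorial * lam ^ m / Real.Gamma (m * β + 1)

/-- The (partial exponential) Bell polynomials `B_{n,k}(x₁, …, x_{n-k+1})`. -/
def bellPoly (n k : ℕ) (x : ℕ → ℂ) : ℂ :=
  ∑ j ∈ (Fintype.piFinset fun _ : Fin (n - k + 1) => Finset.range (n + 1)).filter
      (fun j => (∑ i, j i) = k ∧ (∑ i, (i.1 + 1) * j i) = n),
    (n.factorial : ℂ) / (∏ i, ((j i).factorial : ℂ)) *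
      ∏ i, (x (i.1 + 1) / ((i.1 + 1).factorial : ℂ)) ^ j i

/-! ### Binomial series and the discrete resolvent -/

/-- The `N`-th coefficient `a(a+1)⋯(a+N-1)/N!` of the series `(1-z)^(-a)`. -/
def negBinom (a : ℝ) (N : ℕ) : ℝ := ∏ j ∈ Finset.range N, (a + j) / (j + 1)

lemma negBinom_zero (a : ℝ) : negBinom a 0 = 1 := by simp [negBinom]

lemma negBinom_succ (a : ℝ) (N : ℕ) :
    negBinom a (N + 1) = negBinom a N * ((a + N) / (N + 1)) := by
  rw [negBinom, Finset.prod_range_succ, negBinom]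

lemma negBinom_nonneg {a : ℝ} (ha : 0 ≤ a) (N : ℕ) : 0 ≤ negBinom a N :=
  Finset.prod_nonneg fun j _ => by positivity

lemma negBinom_eq_multichoose (a : ℝ) (N : ℕ) : negBinom a N = Ring.multichoose a N := by
  have h := Ring.factorial_nsmul_multichoose_eq_ascPochhammer a N
  rw [Polynomial.ascPochhammer_smeval_eq_eval] at h
  have h2 : (N.factorial : ℝ) * negBinom a N = (ascPochhammer ℝ N).eval a := by
    clear h
    induction N with
    | zero => simp [negBinom_zero]
    | succ N ih =>
      rw [ascPochhammer_succ_eval, ← ih, negBinom_succ, Nat.factorial_succ]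
      push_cast
      field_simp
  have h3 : (N.factorial : ℝ) ≠ 0 := by positivity
  apply mul_left_cancel₀ h3
  rw [h2, ← h, nsmul_eq_mul]

/-- Coefficient form of `(1-z)^(-a) * (1-z)^(-b) = (1-z)^(-(a+b))`. -/
lemma negBinom_conv (a b : ℝ) (N : ℕ) :
    ∑ p ∈ Finset.HasAntidiagonal.antidiagonal N, negBinom a p.1 * negBinom b p.2 = negBinom (a + b) N := by
  have key : ∀ (r : ℝ) (n : ℕ), negBinom r n = (-1) ^ n * Ring.choose (-r) n := by
    intro r n
    rw [Ring.choose_neg, negBinom_eq_multichoose, Int.negOnePow_def]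
    rw [Units.smul_def, zsmul_eq_mul, ← mul_assoc]
    simp [← mul_pow, Ring.multichoose_eq]
  rw [key, neg_add, Ring.add_choose_eq N (Commute.all _ _), Finset.mul_sum]
  refine Finset.sum_congr rfl fun p hp => ?_
  rw [key, key, ← Finset.HasAntidiagonal.mem_antidiagonal.1 hp, pow_add]
  ring

lemma negBinom_neg_nonpos {β : ℝ} (h0 : 0 ≤ β) (h1 : β ≤ 1) (N : ℕ) :
    negBinom (-β) (N + 1) ≤ 0 := by
  induction N with
  | zero => simp [negBinom, h0]
  | succ N ih =>
    rw [negBinom_succ]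
    apply mul_nonpos_of_nonpos_of_nonneg ih
    push_cast
    have : (0 : ℝ) ≤ N := by positivity
    apply div_nonneg <;> linarith

/-- Nonnegativity of the `N`-th coefficient of `(1-z)^(β-1) / ((1-z)^β + c)^k`, written as its
expansion in powers of `c`. Since `(1-z)^β + c = (1+c) - S(z)` where `S` has nonnegative
coefficients and `S(0) = 0`, dividing by it preserves nonnegativity of coefficients. -/
lemma coeff_resolvent_nonneg {β c : ℝ} (h0 : 0 ≤ β) (h1 : β ≤ 1) (hc : 0 ≤ c) (N : ℕ)
    (hs : ∀ k : ℕ, ∀ j ≤ N, Summable fun m : ℕ =>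
      (k.multichoose m : ℝ) * (-c) ^ m * negBinom (β * (m + k) + (1 - β)) j) (k : ℕ) :
    0 ≤ ∑' m : ℕ, (k.multichoose m : ℝ) * (-c) ^ m * negBinom (β * (m + k) + (1 - β)) N := by
  suffices H : ∀ k : ℕ, ∀ j ≤ N, 0 ≤ ∑' m : ℕ,
      (k.multichoose m : ℝ) * (-c) ^ m * negBinom (β * (m + k) + (1 - β)) j from H k N le_rfl
  intro k
  induction k with
  | zero =>
    intro j _
    rw [tsum_eq_single 0]
    · simp only [Nat.multichoose_zero_right, pow_zero, Nat.cast_one, one_mul, Nat.cast_zero,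
        add_zero, mul_zero, zero_add]
      exact negBinom_nonneg (by linarith) j
    · intro m hm
      obtain ⟨m, rfl⟩ := Nat.exists_eq_succ_of_ne_zero hm
      simp
  | succ k ihk =>
    set G : ℕ → ℕ → ℝ := fun k j => ∑' m : ℕ,
      (k.multichoose m : ℝ) * (-c) ^ m * negBinom (β * (m + k) + (1 - β)) j with hG
    -- Coefficient form of `((1-z)^β + c) * G_{k+1} = G_k`; Pascal's rule for `multichoose` gives it.
    have hrec : ∀ j ≤ N, ∑ p ∈ Finset.HasAntidiagonal.antidiagonal j, negBinom (-β) p.1 * G (k + 1) p.2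
        + c * G (k + 1) j = G k j := by
      intro j hj
      have e1 : ∑ p ∈ Finset.HasAntidiagonal.antidiagonal j, negBinom (-β) p.1 * G (k + 1) p.2 =
          ∑' m : ℕ, ((k + 1).multichoose m : ℝ) * (-c) ^ m *
            negBinom (β * (m + k) + (1 - β)) j := by
        simp only [hG, ← tsum_mul_left]
        rw [← Summable.tsum_finsetSum]
        · refine tsum_congr fun m => ?_
          have : β * (m + k) + (1 - β) = -β + (β * (m + (k + 1 : ℕ)) + (1 - β)) := by
            push_cast; ring
          rw [this, ← negBinom_conv, Finset.mul_sum]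
          refine Finset.sum_congr rfl fun p _ => by ring
        · intro p hp
          have := Finset.HasAntidiagonal.mem_antidiagonal.1 hp
          exact (hs (k + 1) p.2 (by omega)).mul_left _
      have hs1 : Summable fun m : ℕ => ((k + 1).multichoose m : ℝ) * (-c) ^ m *
            negBinom (β * (m + k) + (1 - β)) j := by
        have : (fun m : ℕ => ((k + 1).multichoose m : ℝ) * (-c) ^ m *
            negBinom (β * (m + k) + (1 - β)) j) = fun m : ℕ =>
            ∑ p ∈ Finset.HasAntidiagonal.antidiagonal j, negBinom (-β) p.1 *
              (((k + 1).multichoose m : ℝ) * (-c) ^ m *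
                negBinom (β * (m + (k + 1 : ℕ)) + (1 - β)) p.2) := by
          funext m
          have : β * (m + k) + (1 - β) = -β + (β * (m + (k + 1 : ℕ)) + (1 - β)) := by
            push_cast; ring
          rw [this, ← negBinom_conv, Finset.mul_sum]
          refine Finset.sum_congr rfl fun p _ => by ring
        rw [this]
        refine summable_sum fun p hp => ?_
        have := Finset.HasAntidiagonal.mem_antidiagonal.1 hp
        exact (hs (k + 1) p.2 (by omega)).mul_left _
      rw [e1, hs1.tsum_eq_zero_add]
      simp only [hG]
      rw [(hs k j hj).tsum_eq_zero_add, ← tsum_mul_left, add_assoc, ← Summable.tsum_add]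
      · simp only [Nat.multichoose_zero_right]
        congr 1
        refine tsum_congr fun m => ?_
        rw [Nat.multichoose_succ_succ]
        push_cast
        have : β * (m + (k + 1)) + (1 - β) = β * (m + 1 + k) + (1 - β) := by ring
        rw [this, pow_succ]
        ring
      · exact (summable_nat_add_iff 1).2 hs1
      · exact (hs (k + 1) j hj).mul_left _
    -- The constant term of `(1-z)^β + c` is `1 + c`, all its other coefficients are nonpositive.
    intro j
    induction j using Nat.strong_induction_on with
    | _ j ihj =>
      intro hj
      have h := hrec j hj
      rw [Finset.Nat.sum_antidiagonal_eq_sum_range_succ_mk, Finset.sum_range_succ'] at h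
      simp only [negBinom_zero, one_mul, Nat.sub_zero] at h
      have h2 : ∑ i ∈ Finset.range j, negBinom (-β) (i + 1) * G (k + 1) (j - (i + 1)) ≤ 0 := by
        refine Finset.sum_nonpos fun i hi => ?_
        have := Finset.mem_range.1 hi
        exact mul_nonpos_of_nonpos_of_nonneg (negBinom_neg_nonpos h0 h1 i)
          (ihj _ (by omega) (by omega))
      have h3 : 0 ≤ G k j := ihk j hj
      change 0 ≤ G (k + 1) j
      have h4 : 0 ≤ (1 + c) * G (k + 1) j := by linarith
      exact nonneg_of_mul_nonneg_right h4 (by linarith)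

/-- A bound for `binom(N+a, N)` which, after division by `N^a`, is of order `(2/R)^a` uniformly in
`N ≥ R`. The factors `1 + a/N` are estimated by the tangent line of `log (1 + a/N)` at `a = R`. -/
lemma negBinom_le {a : ℝ} (ha : 0 ≤ a) {R : ℕ} (hR : 1 ≤ R) (N : ℕ) :
    negBinom (a + 1) N ≤ (R + 1 : ℝ) ^ R * (((N : ℝ) + R) / R) ^ a := by
  have hR' : (1 : ℝ) ≤ R := by exact_mod_cast hR
  -- The first factor absorbs the correction terms, so that the estimate closes under induction;
  -- it stays below `(R + 1)^R`.
  have hind : negBinom (a + 1) N ≤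
      (((N : ℝ) + 1) * (R + 1) / (N + R + 1)) ^ R * (((N : ℝ) + R) / R) ^ a := by
    induction N with
    | zero =>
      have : (R : ℝ) ≠ 0 := by positivity
      have h2 : (R : ℝ) + 1 ≠ 0 := by positivity
      simp [negBinom_zero, this, h2]
    | succ N ih =>
      have hN : (0 : ℝ) ≤ N := by positivity
      rw [negBinom_succ]
      have hpos : (0 : ℝ) ≤ (a + 1 + N) / (N + 1) := by positivity
      refine (mul_le_mul_of_nonneg_right ih hpos).trans ?_
      set M : ℝ := N + 1 with hM
      have hMp : 0 < M := by positivity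
      have f1 : (a + 1 + N) / (N + 1) ≤ (1 + R / M) * Real.exp ((a - R) / (M + R)) := by
        have := Real.add_one_le_exp ((a - R) / (M + R))
        refine le_trans (le_of_eq ?_) (mul_le_mul_of_nonneg_left this (by positivity))
        have : M + R ≠ 0 := by positivity
        rw [← hM, show a + 1 + (N : ℝ) = a + M by rw [hM]; ring]
        field_simp
        ring
      have f2 : (1 + R / M) ≤ ((M + 1) / M) ^ R := by
        have := one_add_mul_le_pow (a := 1 / M) (by have : 0 ≤ 1 / M := by positivity
                                                    linarith) R
        calc (1 + R / M) = 1 + R * (1 / M) := by ring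
          _ ≤ _ := this
          _ = _ := by congr 1; field_simp
      have f3 : Real.exp ((a - R) / (M + R)) ≤
          ((M + R) / (M + R + 1)) ^ R * ((M + R) / (N + R)) ^ a := by
        have e1 : Real.exp ((a - R) / (M + R)) =
            (Real.exp (-(1 / (M + R)))) ^ R * (Real.exp (1 / (M + R))) ^ a := by
          rw [← Real.exp_nat_mul, ← Real.exp_mul, ← Real.exp_add]
          congr 1
          ring
        rw [e1]
        have hMR : 0 < M + R := by positivity
        have hNR : (0 : ℝ) < N + R := by positivity
        gcongr
        · rw [Real.exp_neg, inv_le_comm₀ (Real.exp_pos _) (by positivity), inv_div]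
          have := Real.add_one_le_exp (1 / (M + R))
          refine le_trans (le_of_eq ?_) this
          field_simp
          ring
        · have := Real.add_one_le_exp (-(1 / (M + R)))
          rw [Real.exp_neg] at this
          rw [← inv_inv (Real.exp _), inv_le_comm₀ (by positivity) (by positivity), inv_div]
          refine le_trans (le_of_eq ?_) this
          field_simp
          rw [hM]; ring
      have f4 : (a + 1 + N) / (N + 1) ≤ ((M + 1) / M) ^ R *
          (((M + R) / (M + R + 1)) ^ R * ((M + R) / (N + R)) ^ a) :=
        f1.trans (mul_le_mul f2 f3 (Real.exp_pos _).le (by positivity))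
      refine (mul_le_mul_of_nonneg_left f4 (by positivity)).trans (le_of_eq ?_)
      have hNR : (0 : ℝ) < N + R := by positivity
      push_cast
      rw [← hM]
      have g1 : (M * (R + 1) / (N + R + 1)) ^ R * ((M + 1) / M) ^ R *
          ((M + R) / (M + R + 1)) ^ R = ((M + 1) * (R + 1) / (M + R + 1)) ^ R := by
        rw [← mul_pow, ← mul_pow]
        congr 1
        rw [show (N : ℝ) + R + 1 = M + R by rw [hM]; ring]
        have : M + R ≠ 0 := by positivity
        field_simp
      have g2 : (((N : ℝ) + R) / R) ^ a * ((M + R) / (N + R)) ^ a = ((M + R) / R) ^ a := by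
        rw [← Real.mul_rpow (by positivity) (by positivity)]
        congr 1
        field_simp
      rw [← g1, ← g2]
      ring
  refine hind.trans ?_
  gcongr
  rw [div_le_iff₀ (by positivity)]
  nlinarith [show (0 : ℝ) ≤ N by positivity]

/-- Euler's limit: `binom(N+a, N) / N^a → 1/Γ(a+1)`. -/
lemma tendsto_negBinom {a : ℝ} (ha : 0 ≤ a) :
    Filter.Tendsto (fun N : ℕ => negBinom (a + 1) N / (N : ℝ) ^ a) Filter.atTop
      (nhds (1 / Real.Gamma (a + 1))) := by
  have h1 := Real.GammaSeq_tendsto_Gamma (a + 1)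
  have hG : Real.Gamma (a + 1) ≠ 0 := (Real.Gamma_pos_of_pos (by linarith)).ne'
  have h2 : Filter.Tendsto (fun N : ℕ => (N : ℝ) / (N + (a + 1))) Filter.atTop (nhds 1) :=
    tendsto_natCast_div_add_atTop (a + 1)
  refine (h2.div h1 hG).congr' ?_
  filter_upwards [Filter.eventually_gt_atTop 0] with N hN
  have hN' : (0 : ℝ) < N := by exact_mod_cast hN
  have hp : (0 : ℝ) < ∏ j ∈ Finset.range N, (a + 1 + j) :=
    Finset.prod_pos fun j _ => by positivity
  have hf : ∏ j ∈ Finset.range N, ((j : ℝ) + 1) = N.factorial := by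
    rw [← Finset.prod_range_add_one_eq_factorial]; push_cast; rfl
  have hff : (N.factorial : ℝ) ≠ 0 := by positivity
  have hpa : (N : ℝ) ^ a ≠ 0 := by positivity
  simp only [Pi.div_apply]
  rw [Real.GammaSeq, negBinom, Finset.prod_div_distrib, hf, Finset.prod_range_succ,
    Real.rpow_add_one hN'.ne']
  have : (N : ℝ) + (a + 1) ≠ 0 := by positivity
  have : a + 1 + (N : ℝ) ≠ 0 := by positivity
  field_simp
  ring

/-! ### Nonnegativity of the series of the Mittag-Leffler derivatives -/

/-- For every `r` there is a rate `R` such that the bound of `negBinom_le` beats `r^m`. -/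
lemma exists_rate {β : ℝ} (h0 : 0 < β) (r : ℝ) :
    ∃ R : ℕ, 1 ≤ R ∧ r * ((2 : ℝ) / R) ^ β < 1 / 2 := by
  have h : Filter.Tendsto (fun R : ℕ => r * ((2 : ℝ) / R) ^ β) Filter.atTop (nhds 0) := by
    have h1 : Filter.Tendsto (fun R : ℕ => (2 : ℝ) / R) Filter.atTop (nhds 0) :=
      tendsto_const_div_atTop_nhds_zero_nat 2
    have h2 := h1.rpow_const (p := β) (Or.inr h0.le)
    rw [Real.zero_rpow h0.ne'] at h2
    simpa using h2.const_mul r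
  obtain ⟨R, hR⟩ := ((h.eventually (gt_mem_nhds (show (0 : ℝ) < 1 / 2 by norm_num))).and
    (Filter.eventually_ge_atTop 1)).exists
  exact ⟨R, hR.2, hR.1⟩

/-- The dominating bound for the limit `N → ∞`: it is independent of `N`. -/
lemma negBinom_div_le {a : ℝ} (ha : 0 ≤ a) {R N j : ℕ} (hR : 1 ≤ R) (hN : R ≤ N) (hj : j ≤ N) :
    negBinom (a + 1) j / (N : ℝ) ^ a ≤ (R + 1 : ℝ) ^ R * ((2 : ℝ) / R) ^ a := by
  have hR' : (1 : ℝ) ≤ R := by exact_mod_cast hR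
  have hN' : (R : ℝ) ≤ N := by exact_mod_cast hN
  have hj' : (j : ℝ) ≤ N := by exact_mod_cast hj
  have hNp : (0 : ℝ) < N := by linarith
  rw [div_le_iff₀ (by positivity), mul_assoc, ← Real.mul_rpow (by positivity) (by positivity)]
  refine (negBinom_le ha hR j).trans ?_
  gcongr
  rw [div_mul_eq_mul_div]
  gcongr
  linarith

/-- A lower bound for `Γ` strong enough to make the Mittag-Leffler series entire. -/
lemma inv_Gamma_le {a : ℝ} (ha : 0 ≤ a) {R : ℕ} (hR : 1 ≤ R) :
    1 / Real.Gamma (a + 1) ≤ (R + 1 : ℝ) ^ R * ((2 : ℝ) / R) ^ a := by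
  refine le_of_tendsto (tendsto_negBinom ha) ?_
  filter_upwards [Filter.eventually_ge_atTop R] with N hN
  exact negBinom_div_le ha hR hN le_rfl

lemma multichoose_succ_eq (k m : ℕ) : (k + 1).multichoose m = (m + k).choose k := by
  rw [Nat.multichoose_eq, show k + 1 + m - 1 = m + k by omega, ← Nat.choose_symm_add]

/-- Nonnegativity of the series for `E_β^{(k)}(-λ) / k!`, as a limit over `N` of positive multiples
of the sums in `coeff_resolvent_nonneg` with `c = λ / N^β` and exponent `k + 1`. -/
lemma series_nonneg {lam β : ℝ} (hlam : 0 < lam) (h0 : 0 < β) (h1 : β ≤ 1) (k : ℕ) :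
    0 ≤ ∑' m : ℕ, ((m + k).choose k : ℝ) * (-lam) ^ m * (1 / Real.Gamma (β * (m + k) + 1)) := by
  obtain ⟨R, hR, hρ⟩ := exists_rate h0 lam
  have hR' : (1 : ℝ) ≤ R := by exact_mod_cast hR
  set ρ : ℝ := ((2 : ℝ) / R) ^ β with hρdef
  have hρ0 : 0 < ρ := by positivity
  have hpow : ∀ s : ℝ, ((2 : ℝ) / R) ^ (β * s) = ρ ^ s := fun s => Real.rpow_mul (by positivity) _ _
  have hgeo : ∀ k : ℕ, Summable fun m : ℕ => ((m + k).choose k : ℝ) * (lam * ρ) ^ m := fun k =>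
    summable_choose_mul_geometric_of_norm_lt_one k (by
      rw [Real.norm_of_nonneg (by positivity)]; linarith)
  have hbound : ∀ k : ℕ, Summable fun m : ℕ => ((m + k).choose k : ℝ) * lam ^ m *
      ((R + 1 : ℝ) ^ R * ((2 : ℝ) / R) ^ (β * (m + k))) := by
    intro k
    refine ((hgeo k).mul_left ((R + 1 : ℝ) ^ R * ρ ^ k)).congr fun m => ?_
    rw [hpow, ← Nat.cast_add, Real.rpow_natCast, pow_add, mul_pow]
    ring
  have hlim := tendsto_tsum_of_dominated_convergence (𝓕 := Filter.atTop)
    (f := fun (N : ℕ) (m : ℕ) => ((m + k).choose k : ℝ) * (-lam) ^ m *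
      (negBinom (β * (m + k) + 1) N / (N : ℝ) ^ (β * (m + k))))
    (g := fun m : ℕ => ((m + k).choose k : ℝ) * (-lam) ^ m *
      (1 / Real.Gamma (β * (m + k) + 1))) (hbound k)
    (fun m => (tendsto_negBinom (by positivity)).const_mul _)
    (by
      filter_upwards [Filter.eventually_ge_atTop R] with N hN m
      have ha : (0 : ℝ) ≤ β * (m + k) := by positivity
      rw [norm_mul, norm_mul, norm_pow, norm_neg, Real.norm_of_nonneg hlam.le,
        Real.norm_of_nonneg (Nat.cast_nonneg _), Real.norm_of_nonneg
          (div_nonneg (negBinom_nonneg (by positivity) N) (by positivity))]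
      exact mul_le_mul_of_nonneg_left (negBinom_div_le ha hR hN le_rfl) (by positivity))
  refine ge_of_tendsto hlim ?_
  filter_upwards [Filter.eventually_ge_atTop R] with N hN
  have hN' : (R : ℝ) ≤ N := by exact_mod_cast hN
  have hNp : (0 : ℝ) < N := by linarith
  -- At scale `N` the parameter of the resolvent is `c = λ / N^β`.
  have hsc : ∀ m k : ℕ, (-(lam / (N : ℝ) ^ β)) ^ m =
      (N : ℝ) ^ (β * k) * ((-lam) ^ m / (N : ℝ) ^ (β * (m + k))) := by
    intro m k
    rw [mul_add, Real.rpow_add hNp, ← neg_div, div_pow, Real.rpow_mul hNp.le β m,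
      Real.rpow_natCast]
    field_simp
  have key := coeff_resolvent_nonneg (β := β) (c := lam / (N : ℝ) ^ β) h0.le h1 (by positivity) N
    (by
      intro k j hj
      cases k with
      | zero =>
        refine summable_of_ne_finset_zero (s := {0}) fun m hm => ?_
        obtain ⟨m, rfl⟩ := Nat.exists_eq_succ_of_ne_zero (by simpa using hm)
        simp
      | succ k =>
        refine Summable.of_norm_bounded ((hbound k).mul_left ((N : ℝ) ^ (β * k))) fun m => ?_
        have ha : (0 : ℝ) ≤ β * (m + k) := by positivity
        have e : β * (m + (k + 1 : ℕ)) + (1 - β) = β * (m + k) + 1 := by push_cast; ring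
        rw [e, hsc m k, multichoose_succ_eq, norm_mul, norm_mul, norm_mul, norm_div, norm_pow,
          norm_neg,
          Real.norm_of_nonneg hlam.le, Real.norm_of_nonneg (Nat.cast_nonneg _),
          Real.norm_of_nonneg (negBinom_nonneg (by positivity) j),
          Real.norm_of_nonneg (show (0 : ℝ) ≤ (N : ℝ) ^ (β * (m + k)) by positivity),
          Real.norm_of_nonneg (show (0 : ℝ) ≤ (N : ℝ) ^ (β * k) by positivity)]
        have := mul_le_mul_of_nonneg_left (negBinom_div_le ha hR hN hj)
          (show 0 ≤ (N : ℝ) ^ (β * k) * (((m + k).choose k : ℝ) * lam ^ m) by positivity)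
        refine le_trans (le_of_eq ?_) (this.trans (le_of_eq ?_)) <;> ring) (k + 1)
  have e : ∑' m : ℕ, ((k + 1).multichoose m : ℝ) * (-(lam / (N : ℝ) ^ β)) ^ m *
      negBinom (β * (m + (k + 1 : ℕ)) + (1 - β)) N =
      (N : ℝ) ^ (β * k) * ∑' m : ℕ, ((m + k).choose k : ℝ) * (-lam) ^ m *
      (negBinom (β * (m + k) + 1) N / (N : ℝ) ^ (β * (m + k))) := by
    rw [← tsum_mul_left]
    refine tsum_congr fun m => ?_
    have e : β * (m + (k + 1 : ℕ)) + (1 - β) = β * (m + k) + 1 := by push_cast; ring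
    rw [e, hsc m k, multichoose_succ_eq]
    ring
  rw [e] at key
  exact nonneg_of_mul_nonneg_right key (by positivity)

/-! ### Entire power series and the moment generating function -/

/-- The coefficient sequence of an everywhere convergent power series. -/
def EntireCoeff {𝕜 : Type*} [RCLike 𝕜] (a : ℕ → 𝕜) : Prop :=
  ∀ r : ℝ, 0 ≤ r → Summable fun n => ‖a n‖ * r ^ n

lemma EntireCoeff.deriv {𝕜 : Type*} [RCLike 𝕜] {a : ℕ → 𝕜} (ha : EntireCoeff a) :
    EntireCoeff fun n => ((n + 1 : ℕ) : 𝕜) * a (n + 1) := by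
  intro r hr
  have h := (summable_nat_add_iff 1).2 (ha (2 * (r + 1)) (by positivity))
  refine Summable.of_nonneg_of_le (fun n => by positivity) (fun n => ?_) h
  rw [norm_mul, RCLike.norm_natCast]
  have h1 : ((n + 1 : ℕ) : ℝ) ≤ 2 ^ (n + 1) := by exact_mod_cast Nat.lt_two_pow_self.le
  have h2 : r ^ n ≤ (r + 1) ^ (n + 1) :=
    (pow_le_pow_left₀ hr (by linarith) n).trans (pow_le_pow_right₀ (by linarith) (by omega))
  calc ((n + 1 : ℕ) : ℝ) * ‖a (n + 1)‖ * r ^ n ≤ 2 ^ (n + 1) * ‖a (n + 1)‖ * (r + 1) ^ (n + 1) := by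
        gcongr
    _ = _ := by rw [mul_pow]; ring

lemma EntireCoeff.hasDerivAt {𝕜 : Type*} [RCLike 𝕜] {a : ℕ → 𝕜} (ha : EntireCoeff a) (x : 𝕜) :
    HasDerivAt (fun x => ∑' n, a n * x ^ n) (∑' n, ((n + 1 : ℕ) : 𝕜) * a (n + 1) * x ^ n) x := by
  set r : ℝ := ‖x‖ + 1 with hr
  have hr0 : 0 ≤ r := by positivity
  have hu : Summable fun n : ℕ => ‖a n‖ * (n * r ^ (n - 1)) := by
    rw [← summable_nat_add_iff 1]
    refine (ha.deriv r hr0).congr fun n => ?_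
    rw [norm_mul, RCLike.norm_natCast]
    simp only [Nat.add_sub_cancel]
    ring
  have hb : ∀ (n : ℕ) (y : 𝕜), y ∈ Metric.ball (0 : 𝕜) r →
      ‖a n * (n * y ^ (n - 1))‖ ≤ ‖a n‖ * (n * r ^ (n - 1)) := by
    intro n y hy
    rw [norm_mul, norm_mul, norm_pow, RCLike.norm_natCast]
    have : ‖y‖ ≤ r := by simpa using (Metric.mem_ball.1 hy).le
    gcongr
  have hx : x ∈ Metric.ball (0 : 𝕜) r := by simp [hr]
  have h0 : (0 : 𝕜) ∈ Metric.ball (0 : 𝕜) r := by simp [hr]; positivity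
  have h := hasDerivAt_tsum_of_isPreconnected (𝕜 := 𝕜) (F := 𝕜) (g := fun n x => a n * x ^ n)
    (g' := fun n x => a n * (n * x ^ (n - 1))) hu
    Metric.isOpen_ball (convex_ball (0 : 𝕜) r).isPreconnected
    (fun n y _ => (hasDerivAt_pow n y).const_mul (a n)) hb h0
    (summable_of_ne_finset_zero (s := {0}) fun n hn => by
      have : n ≠ 0 := by simpa using hn
      simp [this]) hx
  refine h.congr_deriv ?_
  rw [(Summable.of_norm_bounded hu fun n => hb n x hx).tsum_eq_zero_add]
  simp only [Nat.cast_zero, zero_mul, mul_zero, zero_add, Nat.add_sub_cancel]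
  exact tsum_congr fun n => by ring

lemma EntireCoeff.iteratedDeriv {𝕜 : Type*} [RCLike 𝕜] (k : ℕ) : ∀ {a : ℕ → 𝕜}, EntireCoeff a →
    ∀ x : 𝕜, iteratedDeriv k (fun x => ∑' n, a n * x ^ n) x =
      ∑' n, ((n + k).descFactorial k : 𝕜) * a (n + k) * x ^ n := by
  induction k with
  | zero => intro a _ x; simp
  | succ k ih =>
    intro a ha x
    have hd : _root_.deriv (fun x => ∑' n, a n * x ^ n) =
        fun x => ∑' n, (((n + 1 : ℕ) : 𝕜) * a (n + 1)) * x ^ n :=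
      funext fun x => (ha.hasDerivAt x).deriv
    rw [iteratedDeriv_succ', hd, ih ha.deriv x]
    refine tsum_congr fun n => ?_
    rw [← add_assoc, Nat.succ_descFactorial_succ]
    push_cast
    ring

lemma entireCoeff_mittagLeffler {β : ℝ} (h0 : 0 < β) :
    EntireCoeff fun n : ℕ => 1 / Real.Gamma (β * n + 1) := by
  intro r hr
  obtain ⟨R, hR, hρ⟩ := exists_rate h0 r
  have hR' : (1 : ℝ) ≤ R := by exact_mod_cast hR
  have hg : Summable fun n : ℕ => (r * ((2 : ℝ) / R) ^ β) ^ n :=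
    summable_geometric_of_lt_one (by positivity) (by linarith)
  refine Summable.of_nonneg_of_le (fun n => by positivity) (fun n => ?_)
    (hg.mul_left ((R + 1 : ℝ) ^ R))
  have hG : 0 < Real.Gamma (β * n + 1) := Real.Gamma_pos_of_pos (by positivity)
  rw [Real.norm_of_nonneg (by positivity)]
  refine (mul_le_mul_of_nonneg_right (inv_Gamma_le (by positivity) hR)
    (by positivity)).trans (le_of_eq ?_)
  rw [Real.rpow_mul (by positivity), Real.rpow_natCast, mul_pow]
  ring

lemma mittagLefflerR_eq (β : ℝ) : mittagLefflerR β =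
    fun x => ∑' n : ℕ, (1 / Real.Gamma (β * n + 1)) * x ^ n := by
  funext x
  exact tsum_congr fun n => by ring

lemma mittagLeffler_eq (β : ℝ) : mittagLeffler β =
    fun x => ∑' n : ℕ, ((1 / Real.Gamma (β * n + 1) : ℝ) : ℂ) * x ^ n := by
  funext x
  refine tsum_congr fun n => ?_
  rw [Complex.Gamma_ofReal]
  push_cast
  ring

lemma entireCoeff_mittagLeffler_complex {β : ℝ} (h0 : 0 < β) :
    EntireCoeff fun n : ℕ => ((1 / Real.Gamma (β * n + 1) : ℝ) : ℂ) := by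
  intro r hr
  simpa only [Complex.norm_real] using entireCoeff_mittagLeffler h0 r hr

lemma differentiable_mittagLeffler {β : ℝ} (h0 : 0 < β) : Differentiable ℂ (mittagLeffler β) := by
  rw [mittagLeffler_eq]
  exact fun x => ((entireCoeff_mittagLeffler_complex h0).hasDerivAt x).differentiableAt

lemma iteratedDeriv_mittagLeffler_ofReal {β : ℝ} (h0 : 0 < β) (k : ℕ) (x : ℝ) :
    iteratedDeriv k (mittagLeffler β) x = ((iteratedDeriv k (mittagLefflerR β) x : ℝ) : ℂ) := by
  rw [mittagLeffler_eq, mittagLefflerR_eq, (entireCoeff_mittagLeffler_complex h0).iteratedDeriv,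
    (entireCoeff_mittagLeffler h0).iteratedDeriv, Complex.ofReal_tsum]
  exact tsum_congr fun n => by push_cast; ring

/-- Complete monotonicity of `x ↦ E_β(-x)` on the positive half-line. -/
lemma iteratedDeriv_mittagLefflerR_nonneg {lam β : ℝ} (hlam : 0 < lam) (h0 : 0 < β) (h1 : β ≤ 1)
    (k : ℕ) : 0 ≤ iteratedDeriv k (mittagLefflerR β) (-lam) := by
  rw [mittagLefflerR_eq, (entireCoeff_mittagLeffler h0).iteratedDeriv]
  have h := mul_nonneg (Nat.cast_nonneg (α := ℝ) k.factorial) (series_nonneg hlam h0 h1 k)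
  rw [← tsum_mul_left] at h
  refine h.trans (le_of_eq (tsum_congr fun m => ?_))
  rw [Nat.descFactorial_eq_factorial_mul_choose]
  push_cast
  ring

/-- The Taylor expansion of `E_β` at `-λ`, evaluated at `λ(e^z - 1)`. -/
lemma hasSum_fracPoisson_exp {lam β : ℝ} (h0 : 0 < β) (z : ℂ) :
    HasSum (fun k : ℕ =>
      ((lam ^ k / k.factorial * iteratedDeriv k (mittagLefflerR β) (-lam) : ℝ) : ℂ) *
        Complex.exp (z * k)) (mittagLeffler β (lam * (Complex.exp z - 1))) := by
  have h := Complex.hasSum_taylorSeries_of_entire (differentiable_mittagLeffler h0)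
    ((-lam : ℝ) : ℂ) (lam * (Complex.exp z - 1))
  refine h.congr_fun fun k => ?_
  rw [iteratedDeriv_mittagLeffler_ofReal h0]
  have e : (lam : ℂ) * (Complex.exp z - 1) - ((-lam : ℝ) : ℂ) = lam * Complex.exp z := by
    push_cast; ring
  rw [e, mul_pow, mul_comm z, Complex.exp_nat_mul]
  simp only [smul_eq_mul]
  push_cast
  ring

/-- Nonnegativity of the weights is what removes the truncation in `ENNReal.ofReal`. -/
lemma summable_fracPoisson_cexp {lam β : ℝ} (hlam : 0 < lam) (h0 : 0 < β) (h1 : β ≤ 1) (z : ℂ) :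
    Summable fun k : ℕ => (ENNReal.ofReal (lam ^ k / k.factorial *
      iteratedDeriv k (mittagLefflerR β) (-lam))).toReal * ‖Complex.exp (z * ((k : ℝ) : ℂ))‖ := by
  have h := (hasSum_fracPoisson_exp (lam := lam) h0 z).summable.norm
  refine h.congr fun k => ?_
  have hp : 0 ≤ lam ^ k / k.factorial * iteratedDeriv k (mittagLefflerR β) (-lam) :=
    mul_nonneg (by positivity) (iteratedDeriv_mittagLefflerR_nonneg hlam h0 h1 k)
  rw [ENNReal.toReal_ofReal hp, norm_mul, Complex.norm_real, Real.norm_of_nonneg hp]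
  simp

lemma complexMGF_fracPoisson {lam β : ℝ} (hlam : 0 < lam) (h0 : 0 < β) (h1 : β ≤ 1) (z : ℂ) :
    ProbabilityTheory.complexMGF id (fracPoisson lam β) z =
      mittagLeffler β (lam * (Complex.exp z - 1)) := by
  rw [ProbabilityTheory.complexMGF, fracPoisson]
  have h := integral_sum_dirac_eq_tsum (f := fun x : ℝ => Complex.exp (z * x))
    (fun _ => ENNReal.ofReal_ne_top) (summable_fracPoisson_cexp hlam h0 h1 z)
  refine h.trans ?_
  rw [← (hasSum_fracPoisson_exp (lam := lam) h0 z).tsum_eq]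
  refine tsum_congr fun k => ?_
  have hp : 0 ≤ lam ^ k / k.factorial * iteratedDeriv k (mittagLefflerR β) (-lam) :=
    mul_nonneg (by positivity) (iteratedDeriv_mittagLefflerR_nonneg hlam h0 h1 k)
  rw [ENNReal.toReal_ofReal hp, Complex.real_smul, Complex.ofReal_natCast]

lemma integrableExpSet_fracPoisson {lam β : ℝ} (hlam : 0 < lam) (h0 : 0 < β) (h1 : β ≤ 1) :
    ProbabilityTheory.integrableExpSet id (fracPoisson lam β) = Set.univ := by
  refine Set.eq_univ_of_forall fun t => ?_
  change Integrable (fun x : ℝ => Real.exp (t * x)) (fracPoisson lam β)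
  rw [fracPoisson, integrable_sum_dirac_iff fun _ => ENNReal.ofReal_ne_top]
  refine (summable_fracPoisson_cexp hlam h0 h1 t).congr fun k => ?_
  rw [Complex.norm_exp, Real.norm_of_nonneg (Real.exp_pos _).le]
  simp

/-- The moments are the derivatives at `0` of the moment generating function. -/
lemma iteratedDeriv_genFun {lam β : ℝ} (hlam : 0 < lam) (h0 : 0 < β) (h1 : β ≤ 1) (n : ℕ) :
    iteratedDeriv n (fun z : ℂ => mittagLeffler β (lam * (Complex.exp z - 1))) 0 =
      ((fpMoment lam β n : ℝ) : ℂ) := by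
  rw [← funext (complexMGF_fracPoisson hlam h0 h1),
    ProbabilityTheory.iteratedDeriv_complexMGF (by simp [integrableExpSet_fracPoisson hlam h0 h1]),
    fpMoment, ← integral_complex_ofReal]
  simp

/-! ### Bell polynomials and reciprocals of power series -/

/-- The series `∑_{n ≥ 1} (x_n / n!) Xⁿ`, whose powers generate the Bell polynomials. -/
def bellSeries (x : ℕ → ℂ) : PowerSeries ℂ :=
  PowerSeries.X * PowerSeries.mk fun n => x (n + 1) / ((n + 1).factorial : ℂ)

/-- `(∑_{m ≥ 1} x_m X^m / m!)^i / i! = ∑_n B_{n,i}(x) Xⁿ / n!`. Dividing by `X^i`, the coefficient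
of degree `n - i` only involves the first `n - i + 1` terms, to which the multinomial theorem
applies. -/
lemma coeff_bellSeries_pow (x : ℕ → ℂ) {n i : ℕ} (hi : i ≤ n) :
    PowerSeries.coeff n (bellSeries x ^ i) = (i.factorial : ℂ) / n.factorial * bellPoly n i x := by
  set v : ℕ → ℂ := fun n => x (n + 1) / ((n + 1).factorial : ℂ) with hv
  have h1 : PowerSeries.coeff n (bellSeries x ^ i) =
      PowerSeries.coeff (n - i) (PowerSeries.mk v ^ i) := by
    rw [bellSeries, mul_pow, PowerSeries.coeff_X_pow_mul', if_pos hi]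
  have h2 : PowerSeries.coeff (n - i) (PowerSeries.mk v ^ i) =
      (((PowerSeries.mk v).trunc (n - i + 1)) ^ i).coeff (n - i) := by
    have := congrArg (fun p => p.coeff (n - i))
      (PowerSeries.trunc_trunc_pow (PowerSeries.mk v) (n - i + 1) i)
    simp only [PowerSeries.coeff_trunc, Nat.lt_succ_self, if_true] at this
    rw [← this, ← Polynomial.coe_pow, Polynomial.coeff_coe]
  have h3 : (PowerSeries.mk v).trunc (n - i + 1) =
      ∑ l : Fin (n - i + 1), Polynomial.C (v l) * Polynomial.X ^ (l : ℕ) := by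
    rw [Fin.sum_univ_eq_sum_range (fun l => Polynomial.C (v l) * Polynomial.X ^ l)]
    ext m
    rw [PowerSeries.coeff_trunc, Polynomial.finsetSum_coeff]
    simp [Polynomial.coeff_X_pow]
  rw [h1, h2, h3, Finset.sum_pow_eq_sum_piAntidiag, Polynomial.finsetSum_coeff, bellPoly,
    Finset.mul_sum]
  have h4 : ∀ j : Fin (n - i + 1) → ℕ,
      ((Nat.multinomial Finset.univ j : Polynomial ℂ) *
        ∏ l : Fin (n - i + 1), (Polynomial.C (v l) * Polynomial.X ^ (l : ℕ)) ^ j l).coeff (n - i) =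
      if (∑ l : Fin (n - i + 1), (l : ℕ) * j l) = n - i then
        (Nat.multinomial Finset.univ j : ℂ) *
          ∏ l : Fin (n - i + 1), v l ^ j l else 0 := by
    intro j
    simp only [mul_pow, Finset.prod_mul_distrib, ← pow_mul, Finset.prod_pow_eq_pow_sum]
    rw [← Polynomial.C_eq_natCast]
    simp only [← Polynomial.C_pow]
    rw [← map_prod, ← mul_assoc, ← Polynomial.C_mul, Polynomial.coeff_C_mul,
      Polynomial.coeff_X_pow]
    simp [eq_comm]
  simp only [h4]
  rw [← Finset.sum_filter]
  refine Finset.sum_congr ?_ ?_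
  · ext j
    have hsum : ∑ l : Fin (n - i + 1), (l.1 + 1) * j l = ∑ l, l.1 * j l + ∑ l, j l := by
      rw [← Finset.sum_add_distrib]
      exact Finset.sum_congr rfl fun l _ => by ring
    simp only [Finset.mem_filter, Finset.mem_piAntidiag, Fintype.mem_piFinset, Finset.mem_range,
      hsum, Finset.mem_univ, implies_true, and_true]
    constructor
    · rintro ⟨ha, hb⟩
      have ha' : ∑ l, j l = i := ha
      refine ⟨fun l => ?_, ha', by omega⟩
      have : j l ≤ ∑ l, j l :=
        Finset.single_le_sum (f := j) (fun _ _ => Nat.zero_le _) (Finset.mem_univ l)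
      omega
    · rintro ⟨_, ha, hb⟩
      exact ⟨ha, by omega⟩
  · intro j hj
    have hji : ∑ l, j l = i := (Finset.mem_filter.1 hj).2.1
    have hm := Nat.multinomial_spec Finset.univ j
    rw [hji] at hm
    have hm' : (∏ l, ((j l).factorial : ℂ)) * (Nat.multinomial Finset.univ j : ℂ) =
        (i.factorial : ℂ) := by exact_mod_cast hm
    have hp : (∏ l, ((j l).factorial : ℂ)) ≠ 0 :=
      Finset.prod_ne_zero_iff.2 fun l _ => by exact_mod_cast (j l).factorial_ne_zero
    have hn : (n.factorial : ℂ) ≠ 0 := by exact_mod_cast n.factorial_ne_zero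
    rw [← hm']
    simp only [hv]
    field_simp

/-- The reciprocal of `1 + ∑_{m ≥ 1} x_m X^m / m!` through the geometric series. -/
lemma coeff_reciprocal (x : ℕ → ℂ) (G : PowerSeries ℂ) (hG : (1 + bellSeries x) * G = 1) (n : ℕ) :
    PowerSeries.coeff n G = (1 / n.factorial : ℂ) *
      ∑ i ∈ Finset.range (n + 1), (-1 : ℂ) ^ i * i.factorial * bellPoly n i x := by
  have h1 : (1 + bellSeries x) * ∑ i ∈ Finset.range (n + 1), (-bellSeries x) ^ i =
      1 - (-bellSeries x) ^ (n + 1) := by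
    rw [← mul_neg_geom_sum, sub_neg_eq_add]
  have h2 : G = ∑ i ∈ Finset.range (n + 1), (-bellSeries x) ^ i +
      (-bellSeries x) ^ (n + 1) * G := by
    linear_combination (-G) * h1 + (∑ i ∈ Finset.range (n + 1), (-bellSeries x) ^ i) * hG
  have h3 : PowerSeries.coeff n ((-bellSeries x) ^ (n + 1) * G) = 0 := by
    rw [bellSeries, ← mul_neg, mul_pow, mul_assoc, PowerSeries.coeff_X_pow_mul',
      if_neg (by omega)]
  rw [h2, map_add, h3, add_zero, map_sum, Finset.mul_sum]
  refine Finset.sum_congr rfl fun i hi => ?_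
  rw [neg_pow, show (-1 : PowerSeries ℂ) ^ i = PowerSeries.C ((-1 : ℂ) ^ i) by simp,
    PowerSeries.coeff_C_mul, coeff_bellSeries_pow x (by have := Finset.mem_range.1 hi; omega)]
  ring

/-- Derivatives at `0` of the reciprocal of an analytic function normalised by `f 0 = 1`. -/
lemma iteratedDeriv_inv_zero {f : ℂ → ℂ} (hf : ContDiff ℂ ⊤ f) (h0 : f 0 = 1) (n : ℕ) :
    iteratedDeriv n (fun z => (f z)⁻¹) 0 =
      ∑ i ∈ Finset.range (n + 1), (-1 : ℂ) ^ i * i.factorial *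
        bellPoly n i fun j => iteratedDeriv j f 0 := by
  set g : ℂ → ℂ := fun z => (f z)⁻¹ with hg
  have hgc : ContDiffAt ℂ ⊤ g 0 := hf.contDiffAt.inv (by simp [h0])
  have hfg : f * g =ᶠ[nhds 0] fun _ => 1 := by
    filter_upwards [hf.continuous.continuousAt.eventually_ne (show f 0 ≠ 0 by simp [h0])] with z hz
    simp [hg, hz]
  have hL : (1 + bellSeries fun j => iteratedDeriv j f 0) *
      PowerSeries.mk (fun m => iteratedDeriv m g 0 / m.factorial) = 1 := by
    have hF : (1 + bellSeries fun j => iteratedDeriv j f 0) =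
        PowerSeries.mk fun m => iteratedDeriv m f 0 / m.factorial := by
      ext m
      cases m with
      | zero => simp [bellSeries, h0]
      | succ m =>
        rw [map_add, bellSeries, PowerSeries.coeff_succ_X_mul]
        simp [PowerSeries.coeff_one]
    rw [hF]
    ext m
    have h1 := hfg.iteratedDeriv_eq m
    rw [iteratedDeriv_mul (hf.contDiffAt.of_le le_top) (hgc.of_le le_top), iteratedDeriv_const] at h1
    rw [PowerSeries.coeff_mul, Finset.Nat.sum_antidiagonal_eq_sum_range_succ_mk,
      PowerSeries.coeff_one]
    have hm : (m.factorial : ℂ) ≠ 0 := by exact_mod_cast m.factorial_ne_zero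
    have : (if m = 0 then 1 else 0 : ℂ) = (if m = 0 then 1 else 0) / m.factorial := by
      split_ifs with h <;> simp [h]
    rw [this, ← h1, Finset.sum_div]
    refine Finset.sum_congr rfl fun i hi => ?_
    have hi' : i ≤ m := by have := Finset.mem_range.1 hi; omega
    rw [Nat.cast_choose ℂ hi']
    simp only [PowerSeries.coeff_mk]
    have : (i.factorial : ℂ) ≠ 0 := by exact_mod_cast i.factorial_ne_zero
    have : ((m - i).factorial : ℂ) ≠ 0 := by exact_mod_cast (m - i).factorial_ne_zero
    field_simp
  have h := coeff_reciprocal _ _ hL n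
  have hn : (n.factorial : ℂ) ≠ 0 := by exact_mod_cast n.factorial_ne_zero
  rw [PowerSeries.coeff_mk] at h
  field_simp at h
  exact h

theorem stmt17 (lam β : ℝ) (hlam : 0 < lam) (hβ0 : 0 < β) (hβ1 : β ≤ 1) (n : ℕ) (x : ℝ) :
    appell lam β n x =
      ∑ k ∈ Finset.range (n + 1), (n.choose k : ℂ) *
        (∑ i ∈ Finset.range (n - k + 1), (-1 : ℂ) ^ i * (i.factorial : ℂ) *
          bellPoly (n - k) i (fun j => ((fpMoment lam β j : ℝ) : ℂ))) * (x : ℂ) ^ k := by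
  set f : ℂ → ℂ := fun z => mittagLeffler β (lam * (Complex.exp z - 1)) with hf
  have hfd : ContDiff ℂ ⊤ f := by
    apply Differentiable.contDiff
    exact (differentiable_mittagLeffler hβ0).comp (by fun_prop)
  have hf0 : f 0 = 1 := by
    simp only [hf, Complex.exp_zero, sub_self, mul_zero, mittagLeffler]
    rw [tsum_eq_single 0]
    · simp
    · intro m hm
      simp [hm]
  have hmom : (fun j => ((fpMoment lam β j : ℝ) : ℂ)) = fun j => iteratedDeriv j f 0 :=
    funext fun j => (iteratedDeriv_genFun hlam hβ0 hβ1 j).symm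
  have hfun : (fun z : ℂ => Complex.exp (z * x) / mittagLeffler β (lam * (Complex.exp z - 1))) =
      (fun z : ℂ => Complex.exp (x * z)) * fun z => (f z)⁻¹ := by
    funext z
    simp [hf, div_eq_mul_inv, mul_comm z]
  have he : ContDiff ℂ ⊤ fun z : ℂ => Complex.exp (x * z) := by fun_prop
  have hg : ContDiffAt ℂ ⊤ (fun z => (f z)⁻¹) 0 := hfd.contDiffAt.inv (by simp [hf0])
  rw [appell, hfun, iteratedDeriv_mul (he.contDiffAt.of_le le_top) (hg.of_le le_top), hmom]
  refine Finset.sum_congr rfl fun k _ => ?_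
  rw [iteratedDeriv_inv_zero hfd hf0, iteratedDeriv_cexp_const_mul]
  simp only [mul_zero, Complex.exp_zero, mul_one]
  ring
end
end

section
/- Let λ > 0 and β ∈ (0,1]. For every n ∈ ℕ₀, the generalized Appell polynomial at zero satisfies C_n^{λ,β}(0) = ∑_{j=0}^n (−1)^j j! B_{n,j}(M̃_{λ,β}(1), M̃_{λ,β}(2), …, M̃_{λ,β}(n−j+1)), where B_{n,j} are the Bell polynomials and M̃_{λ,β}(m) := m! λ^m / Γ(mβ + 1). -/
/-!
The function `f(z) = E_β(λz)` has Taylor series `F = ∑ λᵐ/Γ(βm+1) Xᵐ` at `0` with constant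
coefficient `1`, and `C_n^{λ,β}(0)` is the `n`-th derivative of `1/f` at `0`. By the Leibniz rule
(`taylor_mul_taylor`) the Taylor series of `1/f` is the inverse of `F` in `ℂ⟦X⟧`, that is,
`∑ⱼ (-1)ʲ Pʲ` with `P = F - 1` (`coeff_of_mul_eq_one`). The multinomial theorem identifies the `n`-th
coefficient of `Pʲ` with `j!/n!` times the Bell polynomial `B_{n,j}` at the numbers `m! · [Xᵐ]P`,
which are the `M̃_{λ,β}(m)` (`factorial_mul_coeff_pow`).
-/

open MeasureTheory Finset
open scoped ENNReal NNReal

noncomputable section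

/-- `Γ` is bounded below by `1/2` on `[1, ∞)`; this only serves to give the Mittag-Leffler series a
positive radius of convergence. -/
lemma half_le_Gamma {x : ℝ} (hx : 1 ≤ x) : 1 / 2 ≤ Real.Gamma x := by
  have hmono : ∀ y : ℝ, 2 ≤ y → 1 ≤ Real.Gamma y := fun y hy => by
    have := Real.Gamma_strictMonoOn_Ici.monotoneOn (a := 2) (b := y) (by simp) (by simpa using hy) hy
    simpa [Real.Gamma_two] using this
  rcases le_total 2 x with h | h
  · linarith [hmono x h]
  · have h1 := hmono (x + 1) (by linarith)
    rw [Real.Gamma_add_one (by linarith)] at h1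
    have h0 : 0 < Real.Gamma x := Real.Gamma_pos_of_pos (by linarith)
    nlinarith

/-- The Taylor coefficients `λᵐ / Γ(βm+1)` of `z ↦ E_β(λz)` at `0`. -/
def mlCoeff (lam β : ℝ) (m : ℕ) : ℂ :=
  ((lam ^ m / Real.Gamma (β * m + 1) : ℝ) : ℂ)

lemma norm_mlCoeff_le {lam β : ℝ} (hlam : 0 < lam) (hβ0 : 0 < β) (m : ℕ) :
    ‖mlCoeff lam β m‖ ≤ 2 * lam ^ m := by
  have hG := half_le_Gamma (x := β * m + 1) (by nlinarith [Nat.cast_nonneg (α := ℝ) m])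
  have hp : 0 < lam ^ m := pow_pos hlam m
  rw [mlCoeff, Complex.norm_real, Real.norm_of_nonneg (by positivity), div_le_iff₀ (by linarith)]
  nlinarith

lemma hasFPowerSeriesAt_mittagLeffler {lam β : ℝ} (hlam : 0 < lam) (hβ0 : 0 < β) :
    HasFPowerSeriesAt (fun z : ℂ => mittagLeffler β (lam * z))
      (FormalMultilinearSeries.ofScalars ℂ (mlCoeff lam β)) 0 := by
  rw [hasFPowerSeriesAt_iff]
  have hball : Metric.ball (0 : ℂ) (1 / lam) ∈ nhds (0 : ℂ) :=
    Metric.ball_mem_nhds _ (by positivity)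
  filter_upwards [hball] with z hz
  have hz' : lam * ‖z‖ < 1 := by
    have : ‖z‖ < 1 / lam := by simpa using hz
    rw [lt_div_iff₀ hlam] at this
    linarith
  have hs : Summable fun m : ℕ => z ^ m * mlCoeff lam β m := by
    refine Summable.of_norm_bounded (g := fun m : ℕ => 2 * (lam * ‖z‖) ^ m)
      ((summable_geometric_of_lt_one (by positivity) hz').mul_left 2) fun m => ?_
    rw [norm_mul, norm_pow]
    calc ‖z‖ ^ m * ‖mlCoeff lam β m‖ ≤ ‖z‖ ^ m * (2 * lam ^ m) := by
          gcongr; exact norm_mlCoeff_le hlam hβ0 m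
      _ = 2 * (lam * ‖z‖) ^ m := by rw [mul_pow]; ring
  have hf : mittagLeffler β (lam * (0 + z)) = ∑' m : ℕ, z ^ m * mlCoeff lam β m := by
    rw [mittagLeffler]
    refine tsum_congr fun m => ?_
    rw [Complex.Gamma_ofReal, mlCoeff, zero_add, mul_pow]
    push_cast
    ring
  simp only [FormalMultilinearSeries.coeff_ofScalars, smul_eq_mul, hf]
  exact hs.hasSum

lemma iteratedDeriv_eq_of_hasFPowerSeriesAt {f : ℂ → ℂ} {a : ℕ → ℂ} {z : ℂ}
    (h : HasFPowerSeriesAt f (FormalMultilinearSeries.ofScalars ℂ a) z) (m : ℕ) :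
    iteratedDeriv m f z = m.factorial * a m := by
  have h2 := h.analyticAt.hasFPowerSeriesAt
  have := congrArg (fun p => FormalMultilinearSeries.coeff p m) (h.eq_formalMultilinearSeries h2)
  simp only [FormalMultilinearSeries.coeff_ofScalars] at this
  rw [this, mul_div_cancel₀ _ (by exact_mod_cast m.factorial_ne_zero)]

/-- The Leibniz rule, read as a product of formal power series. -/
lemma taylor_mul_taylor {f g : ℂ → ℂ} {z : ℂ} (hf : AnalyticAt ℂ f z) (hg : AnalyticAt ℂ g z) :
    PowerSeries.mk (fun m => iteratedDeriv m f z / m.factorial) *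
      PowerSeries.mk (fun m => iteratedDeriv m g z / m.factorial) =
    PowerSeries.mk (fun m => iteratedDeriv m (f * g) z / m.factorial) := by
  ext m
  rw [PowerSeries.coeff_mul, PowerSeries.coeff_mk, iteratedDeriv_mul hf.contDiffAt hg.contDiffAt,
    Finset.Nat.sum_antidiagonal_eq_sum_range_succ_mk, Finset.sum_div]
  refine Finset.sum_congr rfl fun i hi => ?_
  have hi' : i ≤ m := Nat.lt_succ_iff.mp (Finset.mem_range.mp hi)
  rw [PowerSeries.coeff_mk, PowerSeries.coeff_mk, Nat.cast_choose ℂ hi']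
  have : (m.factorial : ℂ) ≠ 0 := by exact_mod_cast m.factorial_ne_zero
  field_simp

/-- If `P` has no constant term, the inverse of `1 + P` is `∑ⱼ (-1)ʲ Pʲ`; the
terms `j > n` do not reach the `n`-th coefficient. -/
lemma coeff_of_mul_eq_one {P G : PowerSeries ℂ} (hP : PowerSeries.constantCoeff P = 0)
    (h : (1 + P) * G = 1) (n : ℕ) :
    PowerSeries.coeff n G =
      ∑ j ∈ Finset.range (n + 1), (-1 : ℂ) ^ j * PowerSeries.coeff n (P ^ j) := by
  have hgeom : (∑ j ∈ Finset.range (n + 1), (-P) ^ j) * (1 + P) = 1 - (-P) ^ (n + 1) := by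
    have := geom_sum_mul_neg (-P) (n + 1)
    simpa using this
  have hG : G = (∑ j ∈ Finset.range (n + 1), (-P) ^ j) + (-P) ^ (n + 1) * G := by
    have : (∑ j ∈ Finset.range (n + 1), (-P) ^ j) * ((1 + P) * G) =
        (1 - (-P) ^ (n + 1)) * G := by rw [← hgeom]; ring
    rw [h] at this
    linear_combination -this
  have hX : (PowerSeries.X : PowerSeries ℂ) ^ (n + 1) ∣ (-P) ^ (n + 1) * G :=
    Dvd.dvd.mul_right (pow_dvd_pow_of_dvd
      ((PowerSeries.X_dvd_iff.mpr hP).neg_right) _) _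
  rw [hG, map_add, PowerSeries.X_pow_dvd_iff.mp hX n (Nat.lt_succ_self n), add_zero, map_sum]
  refine Finset.sum_congr rfl fun j _ => ?_
  rw [neg_pow, show (-1 : PowerSeries ℂ) ^ j = PowerSeries.C ((-1 : ℂ) ^ j) by simp,
    PowerSeries.coeff_C_mul]

/-- Since `P` is divisible by `X`, the `n`-th coefficient of `Pʲ` only sees the coefficients of `P`
of index at most `n - j + 1`. -/
lemma coeff_pow_eq_coeff_trunc_pow {P : PowerSeries ℂ} (hP : PowerSeries.constantCoeff P = 0)
    {n j : ℕ} (hj : j ≤ n) :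
    PowerSeries.coeff n (P ^ j) =
      PowerSeries.coeff n ((∑ i : Fin (n - j + 1),
        PowerSeries.monomial (i.1 + 1) (PowerSeries.coeff (i.1 + 1) P)) ^ j) := by
  obtain ⟨A, rfl⟩ := PowerSeries.X_dvd_iff.mpr hP
  set B : PowerSeries ℂ := ∑ i : Fin (n - j + 1),
    PowerSeries.monomial i.1 (PowerSeries.coeff i.1 A) with hB
  have hQ : (∑ i : Fin (n - j + 1), PowerSeries.monomial (i.1 + 1)
      (PowerSeries.coeff (i.1 + 1) (PowerSeries.X * A))) = PowerSeries.X * B := by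
    rw [hB, Finset.mul_sum]
    refine Finset.sum_congr rfl fun i _ => ?_
    rw [PowerSeries.coeff_succ_X_mul, PowerSeries.X_eq, PowerSeries.monomial_mul_monomial,
      one_mul, add_comm]
  have hAB : (PowerSeries.X : PowerSeries ℂ) ^ (n - j + 1) ∣ A - B := by
    rw [PowerSeries.X_pow_dvd_iff]
    intro m hm
    rw [map_sub, hB, map_sum, Finset.sum_eq_single (⟨m, hm⟩ : Fin (n - j + 1))]
    · simp
    · intro b _ hb
      rw [PowerSeries.coeff_monomial, if_neg]
      rintro rfl
      exact hb rfl
    · simp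
  have hpow := PowerSeries.X_pow_dvd_iff.mp
    (hAB.trans (sub_dvd_pow_sub_pow A B j)) (n - j) (Nat.lt_succ_self _)
  rw [map_sub, sub_eq_zero] at hpow
  obtain ⟨d, rfl⟩ := Nat.exists_eq_add_of_le' hj
  rw [hQ, mul_pow, mul_pow, PowerSeries.coeff_X_pow_mul, PowerSeries.coeff_X_pow_mul]
  simpa using hpow

/-- The exponential generating function of the Bell polynomials:
`B_{n,j}(x)/n!` is the `n`-th coefficient of `Pʲ/j!`, where `P = ∑_{m ≥ 1} x_m Xᵐ/m!`. -/
lemma factorial_mul_coeff_pow {P : PowerSeries ℂ} (hP : PowerSeries.constantCoeff P = 0)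
    (x : ℕ → ℂ) (hx : ∀ m, PowerSeries.coeff (m + 1) P = x (m + 1) / ((m + 1).factorial : ℂ))
    {n j : ℕ} (hj : j ≤ n) :
    (n.factorial : ℂ) * PowerSeries.coeff n (P ^ j) = j.factorial * bellPoly n j x := by
  have hprod : ∀ k : Fin (n - j + 1) → ℕ,
      ∏ i, (PowerSeries.monomial (i.1 + 1) (PowerSeries.coeff (i.1 + 1) P)) ^ k i =
        PowerSeries.monomial (∑ i, (i.1 + 1) * k i)
          (∏ i, (x (i.1 + 1) / ((i.1 + 1).factorial : ℂ)) ^ k i) := by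
    intro k
    simp only [PowerSeries.monomial_eq_C_mul_X_pow, hx, mul_pow, Finset.prod_mul_distrib, ← pow_mul,
      Finset.prod_pow_eq_pow_sum, map_prod, map_pow]
  rw [coeff_pow_eq_coeff_trunc_pow hP hj, Finset.sum_pow_eq_sum_piAntidiag, map_sum, bellPoly,
    Finset.mul_sum, Finset.mul_sum]
  have hset : (Fintype.piFinset fun _ : Fin (n - j + 1) => Finset.range (n + 1)).filter
      (fun k => (∑ i, k i) = j ∧ (∑ i, (i.1 + 1) * k i) = n) =
      (Finset.piAntidiag Finset.univ j).filter (fun k => (∑ i, (i.1 + 1) * k i) = n) := by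
    ext k
    simp only [Finset.mem_filter, Fintype.mem_piFinset, Finset.mem_range, Finset.mem_piAntidiag,
      Finset.mem_univ, implies_true, and_true]
    refine ⟨fun h => h.2, fun h => ⟨fun i => ?_, h⟩⟩
    have := Finset.single_le_sum (f := k) (fun _ _ => Nat.zero_le _) (Finset.mem_univ i)
    have h1 : ∑ i, k i = j := h.1
    omega
  rw [hset, Finset.sum_filter]
  refine Finset.sum_congr rfl fun k hk => ?_
  have hk' : ∑ i, k i = j := (Finset.mem_piAntidiag.mp hk).1
  have hmul : (∏ i, ((k i).factorial : ℂ)) * (Nat.multinomial Finset.univ k : ℂ)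
      = j.factorial := by
    have := Nat.multinomial_spec Finset.univ k
    rw [hk'] at this
    exact_mod_cast this
  have hne : (∏ i, ((k i).factorial : ℂ)) ≠ 0 :=
    Finset.prod_ne_zero_iff.mpr fun i _ => by exact_mod_cast (k i).factorial_ne_zero
  rw [hprod, ← map_natCast (PowerSeries.C (R := ℂ)), PowerSeries.coeff_C_mul,
    PowerSeries.coeff_monomial]
  by_cases h : (∑ i, (i.1 + 1) * k i) = n
  · rw [if_pos h.symm, if_pos h, ← hmul]
    field_simp
  · rw [if_neg (Ne.symm h), if_neg h]
    simp

theorem stmt18 (lam β : ℝ) (hlam : 0 < lam) (hβ0 : 0 < β) (hβ1 : β ≤ 1) (n : ℕ) :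
    genAppell lam β n 0 =
      ∑ j ∈ Finset.range (n + 1), (-1 : ℂ) ^ j * (j.factorial : ℂ) *
        bellPoly n j (fun m => ((tildeM lam β m : ℝ) : ℂ)) := by
  set f : ℂ → ℂ := fun z => mittagLeffler β (lam * z) with hf
  have hfs := hasFPowerSeriesAt_mittagLeffler hlam hβ0
  have hfa : AnalyticAt ℂ f 0 := hfs.analyticAt
  have ha0 : mlCoeff lam β 0 = 1 := by simp [mlCoeff]
  have hf0 : f 0 = 1 := by
    have := iteratedDeriv_eq_of_hasFPowerSeriesAt hfs 0
    simpa [ha0, hf] using this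
  have hga : AnalyticAt ℂ f⁻¹ 0 := hfa.inv (by simp [hf0])
  -- At `x = 0` the numerator of the generating function is identically `1`.
  have happ : genAppell lam β n 0 = iteratedDeriv n f⁻¹ 0 := by
    rw [genAppell]
    congr 1
    funext z
    simp [hf]
  set P : PowerSeries ℂ := PowerSeries.mk (fun m => if m = 0 then 0 else mlCoeff lam β m) with hPdef
  have hP : PowerSeries.constantCoeff P = 0 := by
    rw [← PowerSeries.coeff_zero_eq_constantCoeff_apply, hPdef, PowerSeries.coeff_mk, if_pos rfl]
  have hF : PowerSeries.mk (fun m => iteratedDeriv m f 0 / (m.factorial : ℂ)) = 1 + P := by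
    ext m
    have hm : (m.factorial : ℂ) ≠ 0 := by exact_mod_cast m.factorial_ne_zero
    rw [PowerSeries.coeff_mk, iteratedDeriv_eq_of_hasFPowerSeriesAt hfs m, map_add, hPdef,
      PowerSeries.coeff_mk, PowerSeries.coeff_one, mul_div_cancel_left₀ _ hm]
    by_cases h : m = 0
    · simp [h, ha0]
    · simp [h]
  have hFG : (1 + P) * PowerSeries.mk (fun m => iteratedDeriv m f⁻¹ 0 / (m.factorial : ℂ)) = 1 := by
    rw [← hF, taylor_mul_taylor hfa hga]
    have hev : f * f⁻¹ =ᶠ[nhds 0] fun _ => (1 : ℂ) := by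
      filter_upwards [hfa.continuousAt.eventually_ne (y := 0) (by simp [hf0])] with z hz
      simp [hz]
    ext m
    rw [PowerSeries.coeff_mk, hev.iteratedDeriv_eq, iteratedDeriv_const, PowerSeries.coeff_one]
    by_cases h : m = 0
    · simp [h]
    · simp [h]
  have hn : (n.factorial : ℂ) ≠ 0 := by exact_mod_cast n.factorial_ne_zero
  have key := coeff_of_mul_eq_one hP hFG n
  rw [PowerSeries.coeff_mk, div_eq_iff hn, Finset.sum_mul] at key
  rw [happ, key]
  refine Finset.sum_congr rfl fun j hj => ?_
  have hx : ∀ m, PowerSeries.coeff (m + 1) P =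
      ((tildeM lam β (m + 1) : ℝ) : ℂ) / ((m + 1).factorial : ℂ) := by
    intro m
    have hm : ((m + 1).factorial : ℂ) ≠ 0 := by exact_mod_cast (m + 1).factorial_ne_zero
    rw [hPdef, PowerSeries.coeff_mk, if_neg m.succ_ne_zero, eq_div_iff hm, mlCoeff, tildeM,
      mul_comm β]
    push_cast
    ring
  rw [mul_assoc, mul_assoc, ← factorial_mul_coeff_pow hP
    (fun m => ((tildeM lam β m : ℝ) : ℂ)) hx (Nat.lt_succ_iff.mp (Finset.mem_range.mp hj))]
  ring
end
end

section
/- Let λ > 0 and β ∈ (0,1]. For every n ∈ ℕ₀ and every x ∈ ℝ, the generalized Appell polynomials generated by the fractional Poisson measure satisfy C_n^{λ,β}(x) = ∑_{k=0}^n binom(n,k) [∑_{i=0}^{n−k} (−1)^i i! B_{n−k,i}(M̃_{λ,β}(1), …, M̃_{λ,β}(n−k−i+1))] (x)_k, where B_{n,i} are the Bell polynomials, M̃_{λ,β}(m) := m! λ^m / Γ(mβ + 1), and (x)_k denotes the falling factorial (x)_0 = 1, (x)_k = x(x−1)⋯(x−k+1). -/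
/-!
The generating function is a product `e^{x log(1+z)} · (1 / E_β(λz))`, so by the Leibniz rule
`C_n(x)` is a binomial convolution of the Taylor derivatives of the two factors at `0`.
The first factor is the binomial series, with derivatives `(x)_k`
(`iteratedDeriv_exp_mul_log`).

For the second factor, `Γ` is bounded below on `(0, ∞)` by a positive constant, so `E_β(λz)` is
given near `0` by its power series `1 + u(z)`, where `m! [zᵐ] u = M̃(m)` for `m ≥ 1`. The Taylor
series of `1 / E_β(λz)` is the formal inverse of `1 + u`, that is `∑ᵢ (-u)ⁱ`; its coefficient
at `zᵐ` only involves `i ≤ m` (`coeff_of_mul_eq_one`), and the multinomial theorem identifies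
`m! [zᵐ] uⁱ` with `i! B_{m,i}` (`factorial_mul_coeff_pow`).
-/

open MeasureTheory Finset
open scoped ENNReal NNReal

noncomputable section

lemma iteratedDeriv_of_hasFPowerSeriesAt {f : ℂ → ℂ} {c : ℕ → ℂ}
    (h : HasFPowerSeriesAt f (FormalMultilinearSeries.ofScalars ℂ c) 0) (n : ℕ) :
    iteratedDeriv n f 0 = (n.factorial : ℂ) * c n := by
  have h1 : iteratedDeriv n f 0 / (n.factorial : ℂ) = c n := by
    simpa using congrArg (fun p => FormalMultilinearSeries.coeff p n)
      (h.analyticAt.hasFPowerSeriesAt.eq_formalMultilinearSeries h)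
  have h2 : (n.factorial : ℂ) ≠ 0 := by exact_mod_cast n.factorial_ne_zero
  rw [← h1]
  field_simp

lemma mittagLeffler_hasFPowerSeriesAt {lam β : ℝ} (hlam : 0 < lam) (hβ : 0 < β) :
    HasFPowerSeriesAt (fun z : ℂ => mittagLeffler β (lam * z))
      (FormalMultilinearSeries.ofScalars ℂ
        fun n : ℕ => ((lam ^ n / Real.Gamma (n * β + 1) : ℝ) : ℂ)) 0 := by
  set c : ℕ → ℂ := fun n : ℕ => ((lam ^ n / Real.Gamma (n * β + 1) : ℝ) : ℂ) with hc
  obtain ⟨x₀, hx₀, hmin⟩ := Real.exists_isMinOn_Gamma_Ioi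
  have hx₀' : 0 < Real.Gamma x₀ := Real.Gamma_pos_of_pos (by linarith [hx₀.1])
  -- `‖c n‖ λ⁻ⁿ = 1 / Γ(nβ + 1)` is bounded, so the radius of convergence is at least `1 / λ`.
  have hrad : ((Real.toNNReal lam⁻¹ : ℝ≥0) : ℝ≥0∞) ≤
      (FormalMultilinearSeries.ofScalars ℂ c).radius := by
    refine FormalMultilinearSeries.le_radius_of_bound _ (1 / Real.Gamma x₀) fun n => ?_
    have hpos : 0 < (n : ℝ) * β + 1 := by positivity
    have hG : 0 < Real.Gamma (n * β + 1) := Real.Gamma_pos_of_pos hpos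
    have hle : Real.Gamma x₀ ≤ Real.Gamma (n * β + 1) := hmin hpos
    rw [FormalMultilinearSeries.ofScalars_norm, Real.coe_toNNReal _ (by positivity), hc,
      Complex.norm_real, Real.norm_of_nonneg (by positivity), inv_pow]
    have : lam ^ n / Real.Gamma (n * β + 1) * (lam ^ n)⁻¹ = 1 / Real.Gamma (n * β + 1) := by
      field_simp
    rw [this]
    exact one_div_le_one_div_of_le hx₀' hle
  have hpos : 0 < (FormalMultilinearSeries.ofScalars ℂ c).radius :=
    lt_of_lt_of_le (by simpa using hlam) hrad
  have key := ((FormalMultilinearSeries.ofScalars ℂ c).hasFPowerSeriesOnBall hpos).hasFPowerSeriesAt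
  convert key using 1
  funext z
  simp only [mittagLeffler, FormalMultilinearSeries.sum,
    FormalMultilinearSeries.ofScalars_apply_eq, smul_eq_mul]
  refine tsum_congr fun n => ?_
  rw [Complex.Gamma_ofReal, hc, mul_comm β]
  push_cast
  ring

lemma exp_mul_log_hasFPowerSeriesAt (x : ℂ) :
    HasFPowerSeriesAt (fun z : ℂ => Complex.exp (x * Complex.log (1 + z)))
      (FormalMultilinearSeries.ofScalars ℂ fun n => Ring.choose x n) 0 := by
  refine (Complex.one_add_cpow_hasFPowerSeriesAt_zero (a := x)).congr ?_
  have : ∀ᶠ z : ℂ in nhds 0, 1 + z ≠ 0 :=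
    ContinuousAt.eventually_ne (by fun_prop) (by simp)
  filter_upwards [this] with z hz
  rw [Complex.cpow_def_of_ne_zero hz, mul_comm]

lemma iteratedDeriv_exp_mul_log (x : ℂ) (k : ℕ) :
    iteratedDeriv k (fun z : ℂ => Complex.exp (x * Complex.log (1 + z))) 0 =
      (descPochhammer ℂ k).eval x := by
  rw [iteratedDeriv_of_hasFPowerSeriesAt (exp_mul_log_hasFPowerSeriesAt x), ← nsmul_eq_mul,
    ← Ring.descPochhammer_eq_factorial_smul_choose, ← Polynomial.aeval_eq_smeval,
    ← descPochhammer_map (algebraMap ℤ ℂ), Polynomial.eval_map_algebraMap]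

open PowerSeries in
/-- The inverse of `1 + u`, for `u` without constant term, is the geometric series in `-u`, and
the powers beyond the `m`-th do not contribute to the coefficient at `X ^ m`. -/
lemma coeff_of_mul_eq_one_s19 {u G : PowerSeries ℂ} (hu : X ∣ u) (h : (1 + u) * G = 1) (m : ℕ) :
    coeff m G = ∑ i ∈ Finset.range (m + 1), (-1 : ℂ) ^ i * coeff m (u ^ i) := by
  have hgeom : G - ∑ i ∈ Finset.range (m + 1), (-u) ^ i = (-u) ^ (m + 1) * G := by
    have h1 := mul_neg_geom_sum (-u) (m + 1)
    linear_combination (∑ i ∈ Finset.range (m + 1), (-u) ^ i) * h - G * h1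
  have hdvd : (X : PowerSeries ℂ) ^ (m + 1) ∣ (-u) ^ (m + 1) * G :=
    (pow_dvd_pow_of_dvd ((dvd_neg).2 hu) _).mul_right _
  have h0 := X_pow_dvd_iff.1 hdvd m (Nat.lt_succ_self m)
  rw [← hgeom, map_sub, sub_eq_zero] at h0
  rw [h0, map_sum]
  refine Finset.sum_congr rfl fun i _ => ?_
  rw [neg_pow, show ((-1 : PowerSeries ℂ) ^ i) = C ((-1 : ℂ) ^ i) by simp, coeff_C_mul]

open PowerSeries in
/-- Bell polynomials are the coefficients of the powers of an exponential generating function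
without constant term: `m! [Xᵐ] (∑_{j ≥ 1} a_j X^j / j!)ⁱ = i! B_{m,i}(a)`. -/
lemma factorial_mul_coeff_pow_s19 (a : ℕ → ℂ) {m i : ℕ} (hi : i ≤ m) :
    (m.factorial : ℂ) *
      coeff m ((X * PowerSeries.mk fun j => a (j + 1) / ((j + 1).factorial : ℂ)) ^ i) =
      (i.factorial : ℂ) * bellPoly m i a := by
  set b : ℕ → ℂ := fun j => a (j + 1) / ((j + 1).factorial : ℂ) with hb
  obtain ⟨N, hN⟩ : ∃ N, N = m - i := ⟨_, rfl⟩
  -- Only the terms of degree at most `m - i` of `mk b` matter after cancelling `X ^ i`.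
  set p : PowerSeries ℂ := ∑ j : Fin (N + 1), C (b j) * X ^ (j : ℕ) with hp
  have hcoeff : ∀ d, d < N + 1 → coeff d (PowerSeries.mk b - p) = 0 := by
    intro d hd
    rw [map_sub, coeff_mk, hp, map_sum, Finset.sum_eq_single (⟨d, hd⟩ : Fin (N + 1))]
    · simp
    · intro j _ hj
      rw [coeff_C_mul, coeff_X_pow, if_neg, mul_zero]
      intro h
      exact hj (Fin.ext h.symm)
    · simp
  have htrunc : coeff N (PowerSeries.mk b ^ i) = coeff N (p ^ i) := by
    rw [← sub_eq_zero, ← map_sub]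
    exact X_pow_dvd_iff.1 ((X_pow_dvd_iff.2 hcoeff).trans (sub_dvd_pow_sub_pow _ _ i)) N
      (Nat.lt_succ_self N)
  rw [mul_pow, coeff_X_pow_mul', if_pos hi, ← hN, htrunc, hp,
    Finset.sum_pow_eq_sum_piAntidiag, map_sum]
  have hterm : ∀ k : Fin (N + 1) → ℕ,
      coeff N ((Nat.multinomial Finset.univ k : PowerSeries ℂ) *
        ∏ j : Fin (N + 1), (C (b j) * X ^ (j : ℕ)) ^ k j) =
      if ∑ j : Fin (N + 1), (j : ℕ) * k j = N then
        (Nat.multinomial Finset.univ k : ℂ) * ∏ j : Fin (N + 1), b j ^ k j else 0 := by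
    intro k
    have : ((Nat.multinomial Finset.univ k : PowerSeries ℂ) *
        ∏ j : Fin (N + 1), (C (b j) * X ^ (j : ℕ)) ^ k j) =
        C ((Nat.multinomial Finset.univ k : ℂ) * ∏ j : Fin (N + 1), b j ^ k j) *
          X ^ (∑ j : Fin (N + 1), (j : ℕ) * k j) := by
      simp only [mul_pow, Finset.prod_mul_distrib, ← pow_mul, Finset.prod_pow_eq_pow_sum,
        map_mul, map_prod, map_pow, map_natCast, mul_assoc]
    rw [this, coeff_C_mul, coeff_X_pow]
    split_ifs with h1 h2 h2
    · simp
    · exact absurd h1.symm h2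
    · exact absurd h2.symm h1
    · simp
  simp only [hterm]
  rw [← Finset.sum_filter, bellPoly, ← hN, Finset.mul_sum, Finset.mul_sum]
  refine Finset.sum_congr ?_ ?_
  · ext k
    simp only [Finset.mem_filter, Finset.mem_piAntidiag, Fintype.mem_piFinset, Finset.mem_range,
      Finset.mem_univ, implies_true, and_true]
    have hsum : ∑ j : Fin (N + 1), ((j : ℕ) + 1) * k j = ∑ j : Fin (N + 1), (j : ℕ) * k j + ∑ j, k j := by
      rw [← Finset.sum_add_distrib]
      exact Finset.sum_congr rfl fun j _ => by ring
    rw [hsum]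
    constructor
    · rintro ⟨h1, h2⟩
      change ∑ j, k j = i at h1
      refine ⟨fun j => ?_, h1, by omega⟩
      have := Finset.single_le_sum (f := k) (fun _ _ => Nat.zero_le _) (Finset.mem_univ j)
      change k j ≤ ∑ j, k j at this
      omega
    · rintro ⟨-, h1, h2⟩
      exact ⟨h1, by omega⟩
  · intro k hk
    have hk1 : ∑ j, k j = i := (Finset.mem_filter.1 hk).2.1
    have hspec := Nat.multinomial_spec Finset.univ k
    rw [hk1] at hspec
    have hspec' : (∏ j, ((k j).factorial : ℂ)) * (Nat.multinomial Finset.univ k : ℂ) =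
        (i.factorial : ℂ) := by exact_mod_cast hspec
    have hne : (∏ j, ((k j).factorial : ℂ)) ≠ 0 :=
      Finset.prod_ne_zero_iff.2 fun j _ => by exact_mod_cast (k j).factorial_ne_zero
    rw [← hspec']
    simp only [hb]
    field_simp

open PowerSeries in
/-- The Taylor series of a reciprocal is the formal inverse of the Taylor series. -/
lemma mk_mul_mk_iteratedDeriv_inv {f : ℂ → ℂ} {c : ℕ → ℂ}
    (h : HasFPowerSeriesAt f (FormalMultilinearSeries.ofScalars ℂ c) 0) (h0 : f 0 ≠ 0) :
    PowerSeries.mk c *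
      PowerSeries.mk (fun m => iteratedDeriv m (fun z => (f z)⁻¹) 0 / (m.factorial : ℂ)) = 1 := by
  have hf : AnalyticAt ℂ f 0 := h.analyticAt
  have hg : AnalyticAt ℂ (fun z => (f z)⁻¹) 0 := hf.fun_inv h0
  ext m
  have hm : (m.factorial : ℂ) ≠ 0 := by exact_mod_cast m.factorial_ne_zero
  have hev : (fun z => f z * (f z)⁻¹) =ᶠ[nhds 0] fun _ => (1 : ℂ) := by
    filter_upwards [hf.continuousAt.eventually_ne h0] with z hz
    exact mul_inv_cancel₀ hz
  have hL := iteratedDeriv_fun_mul (n := m) (hf.contDiffAt) (hg.contDiffAt)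
  rw [hev.iteratedDeriv_eq, iteratedDeriv_const] at hL
  rw [coeff_mul, Finset.Nat.sum_antidiagonal_eq_sum_range_succ_mk, coeff_one]
  simp only [coeff_mk]
  apply mul_left_cancel₀ hm
  rw [Finset.mul_sum]
  trans (if m = 0 then (1 : ℂ) else 0)
  · rw [hL]
    refine Finset.sum_congr rfl fun k hk => ?_
    have hk' : k ≤ m := Nat.lt_succ_iff.1 (Finset.mem_range.1 hk)
    rw [iteratedDeriv_of_hasFPowerSeriesAt h,
      ← Nat.choose_mul_factorial_mul_factorial hk']
    have : ((m - k).factorial : ℂ) ≠ 0 := by exact_mod_cast (m - k).factorial_ne_zero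
    push_cast
    field_simp
  · split_ifs with h1
    · simp [h1]
    · simp

open PowerSeries in
lemma iteratedDeriv_inv_mittagLeffler {lam β : ℝ} (hlam : 0 < lam) (hβ : 0 < β) (m : ℕ) :
    iteratedDeriv m (fun z : ℂ => (mittagLeffler β (lam * z))⁻¹) 0 =
      ∑ i ∈ Finset.range (m + 1), (-1 : ℂ) ^ i * (i.factorial : ℂ) *
        bellPoly m i (fun j => ((tildeM lam β j : ℝ) : ℂ)) := by
  have h := mittagLeffler_hasFPowerSeriesAt hlam hβ
  have h0 : mittagLeffler β (lam * (0 : ℂ)) = 1 := by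
    have := iteratedDeriv_of_hasFPowerSeriesAt h 0
    simpa using this
  have hinv := mk_mul_mk_iteratedDeriv_inv h (by rw [h0]; exact one_ne_zero)
  set a : ℕ → ℂ := fun j => ((tildeM lam β j : ℝ) : ℂ) with ha
  have hsplit : (PowerSeries.mk fun n : ℕ => ((lam ^ n / Real.Gamma (n * β + 1) : ℝ) : ℂ)) =
      1 + X * PowerSeries.mk fun j => a (j + 1) / ((j + 1).factorial : ℂ) := by
    ext d
    cases d with
    | zero => simp
    | succ d =>
      have hd : ((d + 1).factorial : ℂ) ≠ 0 := by exact_mod_cast (d + 1).factorial_ne_zero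
      rw [map_add, coeff_succ_X_mul, coeff_mk, coeff_mk, coeff_one, if_neg d.succ_ne_zero, zero_add,
        ha, eq_div_iff hd]
      simp only [tildeM]
      push_cast
      ring
  rw [hsplit] at hinv
  have hc := coeff_of_mul_eq_one_s19 (dvd_mul_right _ _) hinv m
  have hm : (m.factorial : ℂ) ≠ 0 := by exact_mod_cast m.factorial_ne_zero
  rw [coeff_mk, div_eq_iff hm] at hc
  rw [hc, Finset.sum_mul]
  refine Finset.sum_congr rfl fun i hi => ?_
  rw [mul_assoc, mul_assoc,
    ← factorial_mul_coeff_pow_s19 a (Nat.lt_succ_iff.1 (Finset.mem_range.1 hi))]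
  ring

theorem stmt19 (lam β : ℝ) (hlam : 0 < lam) (hβ0 : 0 < β) (hβ1 : β ≤ 1) (n : ℕ) (x : ℝ) :
    genAppell lam β n x =
      ∑ k ∈ Finset.range (n + 1), (n.choose k : ℂ) *
        (∑ i ∈ Finset.range (n - k + 1), (-1 : ℂ) ^ i * (i.factorial : ℂ) *
          bellPoly (n - k) i (fun j => ((tildeM lam β j : ℝ) : ℂ))) *
        (descPochhammer ℂ k).eval (x : ℂ) := by
  have h := mittagLeffler_hasFPowerSeriesAt hlam hβ0
  have h0 : mittagLeffler β (lam * (0 : ℂ)) ≠ 0 := by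
    have := iteratedDeriv_of_hasFPowerSeriesAt h 0
    simp at this
    simp [this]
  have hg : AnalyticAt ℂ (fun z : ℂ => (mittagLeffler β (lam * z))⁻¹) 0 :=
    h.analyticAt.fun_inv h0
  simp only [genAppell, div_eq_mul_inv]
  rw [iteratedDeriv_fun_mul (exp_mul_log_hasFPowerSeriesAt (x : ℂ)).analyticAt.contDiffAt
    hg.contDiffAt]
  refine Finset.sum_congr rfl fun k _ => ?_
  rw [iteratedDeriv_exp_mul_log, iteratedDeriv_inv_mittagLeffler hlam hβ0]
  ring
end
end
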